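/- The theory Th(U) is model complete: whenever U′ and U″ are models of Th(U) such that U′ is a substructure of U″, the inclusion of U′ into U″ is an elementary embedding. -/

import Mathlib

universe u

open FirstOrder FirstOrder.Language FirstOrder.Language.Structure CategoryTheory

namespace Ivanov

/-- The relation symbols of the finite language `L`:
four unary symbols `P`, `Q`, `λ`, `ρ`, a binary `H` and a 4-ary `S`. -/
inductive LRel : ℕ → Type
  | P : LRel 1
  | Q : LRel 1
  | lam : LRel 1
  | rho : LRel 1
  | H : LRel 2
  | S : LRel 4

/-- The finite language `L`. -/
def L : Language := ⟨fun _ => Empty, LRel⟩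

/-- The relational language having a relation symbol `Rₙ` of arity `ar n` for each
index `n ∈ s` with `0 < n`. -/
def L0r (ar : ℕ → ℕ) (s : Set ℕ) : Language :=
  ⟨fun _ => Empty, fun k => {n : ℕ // 0 < n ∧ n ∈ s ∧ ar n = k}⟩

/-- The relation symbol `Rₙ`. -/
def R (ar : ℕ → ℕ) (s : Set ℕ) (n : ℕ) (h1 : 0 < n) (h2 : n ∈ s) :
    (L0r ar s).Relations (ar n) := ⟨n, h1, h2, rfl⟩

/-- The language `L ∪ L₀`. -/
def LFull (ar : ℕ → ℕ) (s : Set ℕ) : Language := L.sum (L0r ar s)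

instance (ar : ℕ → ℕ) (s : Set ℕ) (n : ℕ) : IsEmpty ((LFull ar s).Functions n) :=
  ⟨fun f => Sum.elim Empty.elim Empty.elim f⟩

instance (ar : ℕ → ℕ) (s : Set ℕ) (n : ℕ) : IsEmpty ((L0r ar s).Functions n) :=
  ⟨fun f => Empty.elim f⟩

section

variable (ar : ℕ → ℕ) (s : Set ℕ) {M : Type u} [(LFull ar s).Structure M]

/-- `x` satisfies the unary predicate `P`. -/
def isP (x : M) : Prop := RelMap (L := LFull ar s) (n := 1) (Sum.inl LRel.P) ![x]

/-- `x` satisfies the unary predicate `Q`. -/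
def isQ (x : M) : Prop := RelMap (L := LFull ar s) (n := 1) (Sum.inl LRel.Q) ![x]

/-- `x` satisfies the unary predicate `λ`. -/
def isLam (x : M) : Prop := RelMap (L := LFull ar s) (n := 1) (Sum.inl LRel.lam) ![x]

/-- `x` satisfies the unary predicate `ρ`. -/
def isRho (x : M) : Prop := RelMap (L := LFull ar s) (n := 1) (Sum.inl LRel.rho) ![x]

/-- the binary predicate `H`. -/
def isH (x y : M) : Prop := RelMap (L := LFull ar s) (n := 2) (Sum.inl LRel.H) ![x, y]

/-- the 4-ary predicate `S`. -/
def isS (x y z w : M) : Prop := RelMap (L := LFull ar s) (n := 4) (Sum.inl LRel.S) ![x, y, z, w]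

/-- The basic conditions on the `(L ∪ L₀)`-structures under consideration: `P` and `Q`
partition the universe, `λ`, `ρ`, `H` hold only on `Q`, the `Rₙ` hold only on tuples from `P`,
and `S(a,b,c,d)` implies `a, c ∈ P`, `b, d ∈ Q`. -/
structure IsGood (M : Type u) [(LFull ar s).Structure M] : Prop where
  part : ∀ x : M, isP ar s x ∨ isQ ar s x
  not_both : ∀ x : M, ¬(isP ar s x ∧ isQ ar s x)
  lam_q : ∀ x : M, isLam ar s x → isQ ar s x
  rho_q : ∀ x : M, isRho ar s x → isQ ar s x
  h_q : ∀ x y : M, isH ar s x y → isQ ar s x ∧ isQ ar s y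
  r_p : ∀ (k : ℕ) (r : (L0r ar s).Relations k) (t : Fin k → M),
    RelMap (L := LFull ar s) (n := k) (Sum.inr r) t → ∀ i, isP ar s (t i)
  s_pq : ∀ x y z w : M, isS ar s x y z w →
    isP ar s x ∧ isQ ar s y ∧ isP ar s z ∧ isQ ar s w

/-- `(a, c)` is an `n`-pair of arity `m` (labelling the tuple `a`). -/
structure IsNPair {M : Type u} [(LFull ar s).Structure M] (n m : ℕ)
    (a : Fin m → M) (c : Fin n → M) : Prop where
  le : m ≤ n
  aP : ∀ i, isP ar s (a i)
  cQ : ∀ j, isQ ar s (c j)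
  inj : Function.Injective c
  hH : ∀ i j : Fin n, isH ar s (c i) (c j) ↔ (j : ℕ) = ((i : ℕ) + 1) % n
  hlam : ∀ i : Fin n, isLam ar s (c i) ↔ (i : ℕ) = 0
  hrho : ∀ i : Fin n, isRho ar s (c i) ↔ (i : ℕ) = m - 1
  hS : ∀ (i k : Fin m) (j l : Fin n),
    isS ar s (a i) (c j) (a k) (c l) ↔ a i = a k

/-- The induced structure on a subset of a structure in a relational language. -/
def inducedStr (A : Set M) : (LFull ar s).Structure A where
  funMap := fun {_} f _ => isEmptyElim f
  RelMap := fun {_} r t => RelMap r fun i => (t i : M)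

end

/-- The `P`-part of a structure. -/
abbrev Ppart (ar : ℕ → ℕ) (s : Set ℕ) (M : Type u) [(LFull ar s).Structure M] : Type u :=
  {x : M // isP ar s x}

/-- The `L₀`-structure induced on the `P`-part by the relations `Rₙ`. -/
instance PpartStr (ar : ℕ → ℕ) (s : Set ℕ) (M : Type u) [(LFull ar s).Structure M] :
    (L0r ar s).Structure (Ppart ar s M) where
  funMap := fun {_} f _ => isEmptyElim f
  RelMap := fun {_} r t => RelMap (L := LFull ar s) (Sum.inr r) fun i => (t i : M)

/-- The class `K` of all finite `(L ∪ L₀)`-structures `D` satisfying the basic conditions,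
whose `P`-part is isomorphic to a substructure of `M₀`, and in which, for every `n`, every
`n`-pair whose arity equals the arity of `Rₙ` labels a tuple satisfying `Rₙ`. -/
def Kclass (ar : ℕ → ℕ) (s : Set ℕ) (M₀ : Type u) [(L0r ar s).Structure M₀] :
    Set (Bundled.{u} (LFull ar s).Structure) :=
  {D | Finite D ∧ IsGood ar s D ∧
    Nonempty (Ppart ar s D ↪[L0r ar s] M₀) ∧
    ∀ (n : ℕ) (h1 : 0 < n) (h2 : n ∈ s) (a : Fin (ar n) → D) (c : Fin n → D),
      IsNPair ar s n (ar n) a c →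
        RelMap (L := LFull ar s) (n := ar n) (Sum.inr (R ar s n h1 h2)) a}
/-- The index set `{n : 1 ≤ n ≤ N}` of a finite sublanguage `L_i`. -/
def setLe (N : ℕ) : Set ℕ := {n | n ≤ N}

/-- The inclusion of sublanguages of `L₀`. -/
def L0incl (ar : ℕ → ℕ) {s t : Set ℕ} (h : s ⊆ t) : L0r ar s →ᴸ L0r ar t where
  onFunction := fun {_} f => f
  onRelation := fun {_} r => ⟨r.1, r.2.1, h r.2.2.1, r.2.2.2⟩

/-- The inclusion `L ∪ L_i → L ∪ L_j` of sublanguages of `L ∪ L₀`. -/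
def LFullincl (ar : ℕ → ℕ) {s t : Set ℕ} (h : s ⊆ t) : LFull ar s →ᴸ LFull ar t :=
  (LHom.id L).sumMap (L0incl ar h)

/-- The `L_i`-reduct structure on `M₀` (`L_i` given by the cutoff `N`). -/
def M0redStr (ar : ℕ → ℕ) (N : ℕ) (M₀ : Type u) [(L0r ar Set.univ).Structure M₀] :
    (L0r ar (setLe N)).Structure M₀ :=
  (L0incl ar (Set.subset_univ _)).reduct M₀

/-- The class `K_i` of finite `(L ∪ L_i)`-structures (`L_i` given by the cutoff `N`). -/
def Ksub (ar : ℕ → ℕ) (N : ℕ) (M₀ : Type u) [(L0r ar Set.univ).Structure M₀] :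
    Set (Bundled.{u} (LFull ar (setLe N)).Structure) :=
  letI := M0redStr ar N M₀
  Kclass ar (setLe N) M₀

/-- Two tuples have the same equality type and the same `s`-atomic type. -/
def SameOn {L' : Language} (s : Set (Σ n, L'.Relations n)) {α M N : Type*}
    [L'.Structure M] [L'.Structure N] (a : α → M) (b : α → N) : Prop :=
  (∀ i j, a i = a j ↔ b i = b j) ∧
    ∀ (n : ℕ) (r : L'.Relations n), (⟨n, r⟩ : Σ n, L'.Relations n) ∈ s →
      ∀ σ : Fin n → α, RelMap r (a ∘ σ) ↔ RelMap r (b ∘ σ)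

lemma SameOn.comp {L' : Language} {s : Set (Σ n, L'.Relations n)} {α β M N : Type*}
    [L'.Structure M] [L'.Structure N] {a : α → M} {b : α → N} (h : SameOn s a b) (f : β → α) :
    SameOn s (a ∘ f) (b ∘ f) :=
  ⟨fun i j => h.1 _ _, fun n r hr σ => h.2 n r hr (f ∘ σ)⟩

lemma SameOn.mono {L' : Language} {s t : Set (Σ n, L'.Relations n)} (hst : s ⊆ t)
    {α M N : Type*}
    [L'.Structure M] [L'.Structure N] {a : α → M} {b : α → N} (h : SameOn t a b) :
    SameOn s a b :=
  ⟨h.1, fun n r hr σ => h.2 n r (hst hr) σ⟩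

lemma SameOn.symm {L' : Language} {s : Set (Σ n, L'.Relations n)} {α M N : Type*}
    [L'.Structure M] [L'.Structure N] {a : α → M} {b : α → N} (h : SameOn s a b) :
    SameOn s b a :=
  ⟨fun i j => (h.1 _ _).symm, fun n r hr σ => (h.2 n r hr σ).symm⟩

lemma term_var {L' : Language} [L'.IsRelational] {α : Type*} (t : L'.Term α) :
    ∃ i, t = Term.var i := by
  cases t with
  | var i => exact ⟨i, rfl⟩
  | func f _ => exact isEmptyElim f

lemma isQF_invariant {L' : Language} [L'.IsRelational] {α M : Type*} [L'.Structure M] {n : ℕ}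
    {φ : L'.BoundedFormula α n} (hφ : φ.IsQF) {a b : α → M} {x y : Fin n → M}
    (h : SameOn (Set.univ : Set (Σ n, L'.Relations n)) (Sum.elim a x) (Sum.elim b y)) : φ.Realize a x ↔ φ.Realize b y := by
  induction hφ with
  | falsum => exact Iff.rfl
  | of_isAtomic hat =>
    cases hat with
    | equal t₁ t₂ =>
      obtain ⟨i, rfl⟩ := term_var t₁
      obtain ⟨j, rfl⟩ := term_var t₂
      exact h.1 i j
    | rel r ts =>
      choose σ hσ using fun i => term_var (ts i)
      obtain rfl : ts = fun i => Term.var (σ i) := funext hσ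
      exact h.2 _ r trivial σ
  | imp _ _ h1 h2 =>
    rw [BoundedFormula.realize_imp, BoundedFormula.realize_imp, h1, h2]

/-- An `s`-invariant property is defined by an `s`-invariant formula. -/
lemma exists_formula {L' : Language} {s : Set (Σ n, L'.Relations n)} (hs : s.Finite)
    {α : Type} [Finite α] {M : Type u} [L'.Structure M] (X : (α → M) → Prop)
    (hX : ∀ v w : α → M, SameOn s v w → X v → X w) :
    ∃ ψ : L'.Formula α, (∀ v : α → M, ψ.Realize v ↔ X v) ∧
      ∀ (N N' : Type u) [L'.Structure N] [L'.Structure N'] (v : α → N) (w : α → N'),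
        SameOn s v w → (ψ.Realize v ↔ ψ.Realize w) := by
  classical
  have : Finite s := hs
  let At := (α × α) ⊕ (Σ x : s, Fin x.1.1 → α)
  let χ : At → L'.Formula α := fun t => match t with
    | Sum.inl p => Term.equal (Term.var p.1) (Term.var p.2)
    | Sum.inr p => Relations.formula p.1.1.2 (fun i => Term.var (p.2 i))
  have key : ∀ (N N' : Type u) [L'.Structure N] [L'.Structure N'] (v : α → N) (w : α → N'),
      SameOn s v w ↔ ∀ t, (χ t).Realize v ↔ (χ t).Realize w := by
    intro N N' _ _ v w
    constructor
    · rintro h (⟨i, j⟩ | ⟨⟨⟨n, r⟩, hr⟩, σ⟩)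
      · simpa [χ] using h.1 i j
      · simpa [χ, Function.comp_def] using h.2 n r hr σ
    · intro h
      refine ⟨fun i j => by simpa [χ] using h (Sum.inl (i, j)), fun n r hr σ => ?_⟩
      simpa [χ, Function.comp_def] using h (Sum.inr ⟨⟨⟨n, r⟩, hr⟩, σ⟩)
  let ψ : L'.Formula α := Formula.iSup
    (fun T : {T : Set At // ∃ v : α → M, X v ∧ T = {t | (χ t).Realize v}} =>
      Formula.iInf (fun t : At => if t ∈ T.1 then χ t else (χ t).not))
  have hψ : ∀ (N : Type u) [L'.Structure N] (w : α → N),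
      ψ.Realize w ↔ ∃ v : α → M, X v ∧ SameOn s v w := by
    intro N _ w
    simp only [ψ, Formula.realize_iSup, Formula.realize_iInf, key]
    constructor
    · rintro ⟨⟨T, v, hv, rfl⟩, hT⟩
      refine ⟨v, hv, fun t => ?_⟩
      have := hT t
      by_cases h : (χ t).Realize v <;> simp_all
    · rintro ⟨v, hv, h⟩
      refine ⟨⟨_, v, hv, rfl⟩, fun t => ?_⟩
      have := h t
      by_cases h : (χ t).Realize v <;> simp_all
  refine ⟨ψ, fun v => ?_, fun N N' _ _ v w h => ?_⟩
  · rw [hψ]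
    constructor
    · rintro ⟨w, hw, h⟩
      exact hX _ _ h hw
    · intro h
      exact ⟨v, h, (key _ _ _ _).2 fun _ => Iff.rfl⟩
  · rw [hψ, hψ]
    refine exists_congr fun z => and_congr_right fun _ => ?_
    rw [key, key]
    exact forall_congr' fun t => iff_congr Iff.rfl ((key _ _ _ _).1 h t)

lemma homog {L' : Language} [L'.IsRelational] {U : Type u} [L'.Structure U]
    (hU : L'.IsUltrahomogeneous U) {ι : Type} [Finite ι] (a b : ι → U)
    (h : SameOn (Set.univ : Set (Σ n, L'.Relations n)) a b) :
    ∃ g : U ≃[L'] U, ∀ i, g (a i) = b i := by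
  let S : L'.Substructure U := Substructure.closure L' (Set.range a)
  have hS : ∀ x : S, ∃ i, a i = x.1 := fun x => by
    have := x.2
    rwa [Substructure.mem_closure_iff_of_isRelational] at this
  choose k hk using hS
  let f : S ↪[L'] U :=
    { toFun := fun x => b (k x)
      inj' := fun x y hxy => by
        have : a (k x) = a (k y) := (h.1 _ _).2 hxy
        rw [hk, hk] at this
        exact Subtype.ext this
      map_fun' := fun f => isEmptyElim f
      map_rel' := fun {n} r t => by
        have := h.2 n r trivial (k ∘ t)
        refine this.symm.trans ?_
        have e : a ∘ k ∘ t = fun i => (t i : U) := funext fun i => hk _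
        rw [e]
        exact Iff.rfl }
  obtain ⟨g, hg⟩ := hU S (Substructure.fg_closure (Set.finite_range a)) f
  refine ⟨g, fun i => ?_⟩
  have hi : a i ∈ S := Substructure.subset_closure ⟨i, rfl⟩
  have h1 : f ⟨a i, hi⟩ = g (a i) := by rw [hg]; rfl
  rw [← h1]
  exact (h.1 _ _).1 (hk ⟨a i, hi⟩)

/-- One-step extension in `M₀` from quantifier elimination. -/
lemma m0_step {L' : Language} [L'.IsRelational] [Finite (Σ n, L'.Relations n)]
    {M : Type u} [L'.Structure M]
    (hqe : ∀ (k : ℕ) (φ : L'.Formula (Fin k)), ∃ ψ : L'.Formula (Fin k), ψ.IsQF ∧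
      ∀ a : Fin k → M, φ.Realize a ↔ ψ.Realize a)
    {ι : Type} [Finite ι] (p q : ι → M)
    (h : SameOn (Set.univ : Set (Σ n, L'.Relations n)) p q) (y : M) :
    ∃ z : M, SameOn (Set.univ : Set (Σ n, L'.Relations n))
      (Sum.elim p (fun _ : Unit => y)) (Sum.elim q (fun _ : Unit => z)) := by
  obtain ⟨k, ⟨e⟩⟩ := Finite.exists_equiv_fin ι
  obtain ⟨τ, hτ, -⟩ := exists_formula (L' := L') (s := Set.univ) Set.finite_univ
    (α := Fin k ⊕ Unit) (M := M)
    (fun v => SameOn Set.univ (Sum.elim (p ∘ e.symm) (fun _ : Unit => y)) v)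
    (fun v w h1 h2 => ⟨fun i j => (h2.1 i j).trans (h1.1 i j),
      fun n r hr σ => (h2.2 n r hr σ).trans (h1.2 n r hr σ)⟩)
  obtain ⟨ψ, hψ, hφψ⟩ := hqe k (τ.iExs Unit)
  have h1 : (τ.iExs Unit).Realize (p ∘ e.symm) := by
    rw [Formula.realize_iExs]
    exact ⟨fun _ => y, (hτ _).2 ⟨fun _ _ => Iff.rfl, fun _ _ _ _ => Iff.rfl⟩⟩
  rw [hφψ] at h1
  have h2 : ψ.Realize (q ∘ e.symm) := by
    refine (isQF_invariant hψ ?_).1 h1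
    have := h.comp (f := (Sum.elim e.symm (fun i : Fin 0 => i.elim0) : Fin k ⊕ Fin 0 → ι))
    convert this using 1 <;>
    · funext i
      rcases i with i | i
      · rfl
      · exact i.elim0
  rw [← hφψ, Formula.realize_iExs] at h2
  obtain ⟨z, hz⟩ := h2
  rw [hτ] at hz
  refine ⟨z (), ?_⟩
  have := hz.comp (Sum.map e id)
  convert this using 1 <;>
  · funext i
    rcases i with i | i <;> simp

/-- The finite set of relation symbols of `L ∪ L_N`. -/
def relLe (ar : ℕ → ℕ) (N : ℕ) : Set (Σ n, (LFull ar Set.univ).Relations n) :=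
  {x | match x with
    | ⟨_, Sum.inl _⟩ => True
    | ⟨_, Sum.inr r⟩ => r.1 ≤ N}

lemma LRel_finite : Finite (Σ n, LRel n) := by
  refine Set.finite_univ_iff.1 (Set.Finite.subset (s := {⟨1, LRel.P⟩, ⟨1, LRel.Q⟩, ⟨1, LRel.lam⟩,
    ⟨1, LRel.rho⟩, ⟨2, LRel.H⟩, ⟨4, LRel.S⟩}) (Set.toFinite _) ?_)
  rintro ⟨n, r⟩ -
  cases r <;> simp

lemma L0_finite (ar : ℕ → ℕ) (N : ℕ) :
    Finite (Σ n, (L0r ar (setLe N)).Relations n) := by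
  refine Finite.of_injective (β := Set.Iic N) (fun x => ⟨x.2.1, x.2.2.2.1⟩) ?_
  rintro ⟨n, r, h1, h2, rfl⟩ ⟨n', r', h1', h2', rfl⟩ h
  obtain rfl : r = r' := congrArg Subtype.val h
  rfl

lemma relLe_finite (ar : ℕ → ℕ) (N : ℕ) : (relLe ar N).Finite := by
  have := LRel_finite
  have := L0_finite ar N
  let F : (Σ n, LRel n) ⊕ (Σ n, (L0r ar (setLe N)).Relations n) →
      Σ n, (LFull ar Set.univ).Relations n := Sum.elim (fun x => ⟨x.1, Sum.inl x.2⟩)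
        (fun x => ⟨x.1, Sum.inr ⟨x.2.1, x.2.2.1, trivial, x.2.2.2.2⟩⟩)
  refine (Set.finite_range F).subset ?_
  rintro ⟨n, r | ⟨r, h1, h2, h3⟩⟩ hx
  · exact ⟨Sum.inl ⟨n, r⟩, rfl⟩
  · exact ⟨Sum.inr ⟨n, ⟨r, h1, hx, h3⟩⟩, rfl⟩

lemma relLe_mono (ar : ℕ → ℕ) {N N' : ℕ} (h : N ≤ N') : relLe ar N ⊆ relLe ar N' := by
  rintro ⟨n, r | r⟩ hx
  · trivial
  · exact le_trans (show r.1 ≤ N from hx) h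

/-- The relation symbols of `L_N`. -/
def rel0Le (ar : ℕ → ℕ) (N : ℕ) : Set (Σ n, (L0r ar Set.univ).Relations n) :=
  {x | x.2.1 ≤ N}

lemma m0_step' (ar : ℕ → ℕ) (N : ℕ) (M₀ : Type u) [(L0r ar Set.univ).Structure M₀]
    (hqe : ∀ (k : ℕ) (φ : (L0r ar (setLe N)).Formula (Fin k)),
      ∃ ψ : (L0r ar (setLe N)).Formula (Fin k), ψ.IsQF ∧
        ∀ a : Fin k → M₀,
          Formula.Realize (L := L0r ar Set.univ)
              ((L0incl ar (Set.subset_univ _)).onFormula φ) a ↔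
            Formula.Realize (L := L0r ar Set.univ)
              ((L0incl ar (Set.subset_univ _)).onFormula ψ) a)
    {ι : Type} [Finite ι] (p q : ι → M₀) (h : SameOn (rel0Le ar N) p q) (y : M₀) :
    ∃ z : M₀, SameOn (rel0Le ar N)
      (Sum.elim p (fun _ : Unit => y)) (Sum.elim q (fun _ : Unit => z)) := by
  let inc : L0r ar (setLe N) →ᴸ L0r ar Set.univ := L0incl ar (Set.subset_univ _)
  letI : (L0r ar (setLe N)).Structure M₀ := inc.reduct M₀
  haveI : inc.IsExpansionOn M₀ := LHom.isExpansionOn_reduct inc M₀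
  haveI := L0_finite ar N
  have hqe' : ∀ (k : ℕ) (φ : (L0r ar (setLe N)).Formula (Fin k)),
      ∃ ψ : (L0r ar (setLe N)).Formula (Fin k), ψ.IsQF ∧
      ∀ a : Fin k → M₀, φ.Realize a ↔ ψ.Realize a := by
    intro k φ
    obtain ⟨ψ, h1, h2⟩ := hqe k φ
    refine ⟨ψ, h1, fun a => ?_⟩
    rw [← LHom.realize_onFormula inc φ, ← LHom.realize_onFormula inc ψ]
    exact h2 a
  obtain ⟨z, hz⟩ := m0_step hqe' p q
    ⟨h.1, fun n r _ σ => h.2 n ⟨r.1, r.2.1, trivial, r.2.2.2⟩ r.2.2.1 σ⟩ y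
  exact ⟨z, hz.1, fun n r hr σ => hz.2 n ⟨r.1, r.2.1, hr, r.2.2.2⟩ trivial σ⟩

/-- `e` preserves and reflects the relations of the finite language `L`. -/
def LEmb (ar : ℕ → ℕ) {D V : Type u} [(LFull ar Set.univ).Structure D]
    [(LFull ar Set.univ).Structure V] (e : D → V) : Prop :=
  ∀ (n : ℕ) (r : LRel n) (t : Fin n → D),
    RelMap (L := LFull ar Set.univ) (n := n) (Sum.inl r) (e ∘ t) ↔
      RelMap (L := LFull ar Set.univ) (n := n) (Sum.inl r) t

section transfer

variable {ar : ℕ → ℕ} {D V : Type u} [(LFull ar Set.univ).Structure D]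
    [(LFull ar Set.univ).Structure V] {e : D → V}

lemma comp1 (e : D → V) (x : D) : e ∘ ![x] = ![e x] := by
  funext i; fin_cases i; rfl

lemma comp2 (e : D → V) (x y : D) : e ∘ ![x, y] = ![e x, e y] := by
  funext i; fin_cases i <;> rfl

lemma comp4 (e : D → V) (x y z w : D) : e ∘ ![x, y, z, w] = ![e x, e y, e z, e w] := by
  funext i; fin_cases i <;> rfl

lemma LEmb.isP (he : LEmb ar e) (x : D) : isP ar Set.univ (e x) ↔ isP ar Set.univ x := by
  have := he 1 LRel.P ![x]
  rwa [comp1] at this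

lemma LEmb.isQ (he : LEmb ar e) (x : D) : isQ ar Set.univ (e x) ↔ isQ ar Set.univ x := by
  have := he 1 LRel.Q ![x]
  rwa [comp1] at this

lemma LEmb.isLam (he : LEmb ar e) (x : D) : isLam ar Set.univ (e x) ↔ isLam ar Set.univ x := by
  have := he 1 LRel.lam ![x]
  rwa [comp1] at this

lemma LEmb.isRho (he : LEmb ar e) (x : D) : isRho ar Set.univ (e x) ↔ isRho ar Set.univ x := by
  have := he 1 LRel.rho ![x]
  rwa [comp1] at this

lemma LEmb.isH (he : LEmb ar e) (x y : D) :
    isH ar Set.univ (e x) (e y) ↔ isH ar Set.univ x y := by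
  have := he 2 LRel.H ![x, y]
  rwa [comp2] at this

lemma LEmb.isS (he : LEmb ar e) (x y z w : D) :
    isS ar Set.univ (e x) (e y) (e z) (e w) ↔ isS ar Set.univ x y z w := by
  have := he 4 LRel.S ![x, y, z, w]
  rwa [comp4] at this

lemma LEmb.isNPair (he : LEmb ar e) (hi : Function.Injective e) {n m : ℕ}
    (a : Fin m → D) (c : Fin n → D) :
    IsNPair ar Set.univ n m (fun i => e (a i)) (fun i => e (c i)) ↔
      IsNPair ar Set.univ n m a c := by
  constructor
  · rintro ⟨h1, h2, h3, h4, h5, h6, h7, h8⟩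
    simp only [he.isP, he.isQ, he.isLam, he.isRho, he.isH, he.isS, hi.eq_iff] at *
    exact ⟨h1, h2, h3, fun i j hij => h4 (congrArg e hij), h5, h6, h7, h8⟩
  · rintro ⟨h1, h2, h3, h4, h5, h6, h7, h8⟩
    refine ⟨h1, ?_, ?_, hi.comp h4, ?_, ?_, ?_, ?_⟩ <;>
    simpa only [he.isP, he.isQ, he.isLam, he.isRho, he.isH, he.isS, hi.eq_iff]

lemma emb_LEmb (e : D ↪[LFull ar Set.univ] V) : LEmb ar e :=
  fun _ r t => e.map_rel (Sum.inl r) t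

end transfer

section generic

variable {ar : ℕ → ℕ} {M₀ : Type u} [(L0r ar Set.univ).Structure M₀]
    {U : Type u} [(LFull ar Set.univ).Structure U]

lemma getD
    (hUage : (LFull ar Set.univ).age U = Kclass ar Set.univ M₀) (X : Set U) (hX : X.Finite) :
    ∃ D ∈ Kclass ar Set.univ M₀, ∃ e : D ↪[LFull ar Set.univ] U, ∀ x ∈ X, ∃ d, e d = x := by
  let S : (LFull ar Set.univ).Substructure U := Substructure.closure _ X
  refine ⟨Bundled.of S, ?_, S.subtype, fun x hx => ⟨⟨x, Substructure.subset_closure hx⟩, rfl⟩⟩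
  rw [← hUage]
  exact ⟨(Substructure.fg_iff_structure_fg S).1 (Substructure.fg_closure hX), ⟨S.subtype⟩⟩

lemma goodU
    (hUage : (LFull ar Set.univ).age U = Kclass ar Set.univ M₀) : IsGood ar Set.univ U where
  part x := by
    obtain ⟨D, hD, e, he⟩ := getD hUage {x} (Set.toFinite _)
    obtain ⟨d, rfl⟩ := he x rfl
    have h := emb_LEmb e
    rw [h.isP, h.isQ]
    exact hD.2.1.part d
  not_both x := by
    obtain ⟨D, hD, e, he⟩ := getD hUage {x} (Set.toFinite _)
    obtain ⟨d, rfl⟩ := he x rfl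
    have h := emb_LEmb e
    rw [h.isP, h.isQ]
    exact hD.2.1.not_both d
  lam_q x := by
    obtain ⟨D, hD, e, he⟩ := getD hUage {x} (Set.toFinite _)
    obtain ⟨d, rfl⟩ := he x rfl
    have h := emb_LEmb e
    rw [h.isLam, h.isQ]
    exact hD.2.1.lam_q d
  rho_q x := by
    obtain ⟨D, hD, e, he⟩ := getD hUage {x} (Set.toFinite _)
    obtain ⟨d, rfl⟩ := he x rfl
    have h := emb_LEmb e
    rw [h.isRho, h.isQ]
    exact hD.2.1.rho_q d
  h_q x y := by
    obtain ⟨D, hD, e, he⟩ := getD hUage {x, y} (Set.toFinite _)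
    obtain ⟨d, rfl⟩ := he x (by simp)
    obtain ⟨d2, rfl⟩ := he y (by simp)
    have h := emb_LEmb e
    rw [h.isH, h.isQ, h.isQ]
    exact hD.2.1.h_q d d2
  r_p k r t := by
    obtain ⟨D, hD, e, he⟩ := getD hUage (Set.range t) (Set.toFinite _)
    choose d hd using fun i => he (t i) ⟨i, rfl⟩
    obtain rfl : e ∘ d = t := funext hd
    intro h1 i
    exact ((emb_LEmb e).isP _).2 (hD.2.1.r_p k r d ((e.map_rel _ d).1 h1) i)
  s_pq x y z w := by
    obtain ⟨D, hD, e, he⟩ := getD hUage {x, y, z, w} (Set.toFinite _)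
    obtain ⟨d, rfl⟩ := he x (by simp)
    obtain ⟨d2, rfl⟩ := he y (by simp)
    obtain ⟨d3, rfl⟩ := he z (by simp)
    obtain ⟨d4, rfl⟩ := he w (by simp)
    have h := emb_LEmb e
    rw [h.isS, h.isP, h.isQ, h.isP, h.isQ]
    exact hD.2.1.s_pq d d2 d3 d4

lemma npairU
    (hUage : (LFull ar Set.univ).age U = Kclass ar Set.univ M₀) (n : ℕ) (h1 : 0 < n) (a : Fin (ar n) → U) (c : Fin n → U)
    (h : IsNPair ar Set.univ n (ar n) a c) :
    RelMap (L := LFull ar Set.univ) (n := ar n) (Sum.inr (R ar Set.univ n h1 trivial)) a := by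
  obtain ⟨D, hD, e, he⟩ := getD hUage (Set.range a ∪ Set.range c) (Set.toFinite _)
  choose a' ha using fun i => he (a i) (Or.inl ⟨i, rfl⟩)
  choose c' hc using fun i => he (c i) (Or.inr ⟨i, rfl⟩)
  obtain rfl : e ∘ a' = a := funext ha
  obtain rfl : e ∘ c' = c := funext hc
  refine (e.map_rel _ a').2 (hD.2.2.2 n h1 trivial a' c' ?_)
  exact ((emb_LEmb e).isNPair e.injective a' c').1 h

lemma embU
    (hUage : (LFull ar Set.univ).age U = Kclass ar Set.univ M₀) [Nonempty M₀] (X : Set U) (hX : X.Finite) : ∃ h : U → M₀,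
    (∀ x ∈ X, ∀ y ∈ X, isP ar Set.univ x → isP ar Set.univ y → h x = h y → x = y) ∧
    ∀ (n : ℕ) (r : (L0r ar Set.univ).Relations n) (t : Fin n → U),
      (∀ i, t i ∈ X ∧ isP ar Set.univ (t i)) →
        (RelMap (L := LFull ar Set.univ) (n := n) (Sum.inr r) t ↔ RelMap r (h ∘ t)) := by
  classical
  obtain ⟨D, hD, e, he⟩ := getD hUage X hX
  obtain ⟨f⟩ := hD.2.2.1
  have hP := (emb_LEmb e).isP
  let ev : Ppart ar Set.univ D → U := fun x => e x.1
  have hev : Function.Injective ev := fun x y h => Subtype.ext (e.injective h)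
  let h : U → M₀ := Function.extend ev f (fun _ => Classical.arbitrary M₀)
  have hh : ∀ d, h (ev d) = f d := fun d => hev.extend_apply _ _ _
  have hX' : ∀ x, x ∈ X → isP ar Set.univ x → ∃ d, ev d = x := by
    intro x hx hx'
    obtain ⟨d, rfl⟩ := he x hx
    exact ⟨⟨d, (hP d).1 hx'⟩, rfl⟩
  refine ⟨h, ?_, ?_⟩
  · intro x hx y hy hx' hy' hxy
    obtain ⟨d, rfl⟩ := hX' x hx hx'
    obtain ⟨d2, rfl⟩ := hX' y hy hy'
    rw [hh, hh] at hxy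
    rw [f.injective hxy]
  · intro n r t ht
    choose d hd using fun i => hX' (t i) (ht i).1 (ht i).2
    obtain rfl : ev ∘ d = t := funext hd
    have h1 : h ∘ ev ∘ d = f ∘ d := funext fun i => hh _
    rw [h1, f.map_rel]
    exact e.map_rel (Sum.inr r) (fun i => (d i).1)

lemma exists_g
    (hUage : (LFull ar Set.univ).age U = Kclass ar Set.univ M₀) [Nonempty M₀] (N : ℕ)
    (hstep : ∀ {ι : Type} [Finite ι] (p q : ι → M₀), SameOn (rel0Le ar N) p q → ∀ y : M₀,
      ∃ z : M₀, SameOn (rel0Le ar N)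
        (Sum.elim p (fun _ : Unit => y)) (Sum.elim q (fun _ : Unit => z)))
    {ι : Type} [Finite ι] (a b : ι → U) (hab : SameOn (relLe ar N) a b) (y : U) :
    ∃ g : U → M₀,
      (∀ x ∈ Set.range (Sum.elim a (fun _ : Unit => y)),
        ∀ x' ∈ Set.range (Sum.elim a (fun _ : Unit => y)),
        isP ar Set.univ x → isP ar Set.univ x' → g x = g x' → x = x') ∧
      (∀ (n : ℕ) (r : (L0r ar Set.univ).Relations n), r.1 ≤ N → ∀ (t : Fin n → U),
        (∀ i, t i ∈ Set.range (Sum.elim a (fun _ : Unit => y)) ∧ isP ar Set.univ (t i)) →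
          (RelMap (L := LFull ar Set.univ) (n := n) (Sum.inr r) t ↔ RelMap r (g ∘ t))) ∧
      (∀ (n : ℕ) (r : (L0r ar Set.univ).Relations n) (σ : Fin n → ι),
        (∀ i, isP ar Set.univ (a (σ i))) →
          (RelMap r (g ∘ a ∘ σ) ↔
            RelMap (L := LFull ar Set.univ) (n := n) (Sum.inr r) (b ∘ σ))) := by
  classical
  obtain ⟨hA, hA1, hA2⟩ := embU hUage (Set.range (Sum.elim a (fun _ : Unit => y)))
    (Set.toFinite _)
  obtain ⟨hB, hB1, hB2⟩ := embU hUage (Set.range b) (Set.toFinite _)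
  have hPab : ∀ i, isP ar Set.univ (a i) ↔ isP ar Set.univ (b i) := by
    intro i
    have := hab.2 1 (Sum.inl LRel.P) trivial ![i]
    rwa [show a ∘ ![i] = ![a i] from by funext j; fin_cases j; rfl,
      show b ∘ ![i] = ![b i] from by funext j; fin_cases j; rfl] at this
  suffices H : ∃ (κ : Type) (c : κ → U) (q : κ → M₀), (∀ k, isP ar Set.univ (c k)) ∧
      (∀ x ∈ Set.range (Sum.elim a (fun _ : Unit => y)), isP ar Set.univ x → ∃ k, c k = x) ∧
      (∀ k, c k ∈ Set.range (Sum.elim a (fun _ : Unit => y))) ∧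
      SameOn (rel0Le ar N) (hA ∘ c) q ∧
      ∀ i, isP ar Set.univ (a i) → ∃ k, c k = a i ∧ q k = hB (b i) by
    obtain ⟨κ, c, q, hcP, hsurj, hcA, hsame, hext⟩ := H
    have hc : ∀ i j, c i = c j ↔ q i = q j := by
      intro i j
      rw [← hsame.1 i j]
      exact ⟨fun h => congrArg hA h, fun h => hA1 _ (hcA i) _ (hcA j) (hcP i) (hcP j) h⟩
    let g : U → M₀ := Function.extend c q (fun _ => Classical.arbitrary M₀)
    have hg : ∀ k, g (c k) = q k := fun k =>
      Function.FactorsThrough.extend_apply (fun i j h => (hc i j).1 h) _ k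
    refine ⟨g, ?_, ?_, ?_⟩
    · intro x hx x' hx' hxP hxPp hxx
      obtain ⟨k, rfl⟩ := hsurj x hx hxP
      obtain ⟨k', rfl⟩ := hsurj x' hx' hxPp
      rw [hg, hg] at hxx
      exact (hc _ _).2 hxx
    · intro n r hr t ht
      rw [hA2 n r t ht]
      choose d hd using fun i => hsurj (t i) (ht i).1 (ht i).2
      obtain rfl : c ∘ d = t := funext hd
      rw [show g ∘ c ∘ d = q ∘ d from funext fun i => hg _]
      exact hsame.2 n r hr d
    · intro n r σ hσ
      rw [hB2 n r (b ∘ σ) (fun i => ⟨⟨σ i, rfl⟩, (hPab _).1 (hσ i)⟩)]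
      have : g ∘ a ∘ σ = hB ∘ b ∘ σ := by
        funext i
        obtain ⟨k, h1, h2⟩ := hext (σ i) (hσ i)
        simp only [Function.comp_apply]
        rw [← h1, hg, h2]
      rw [this]
  let J := {i : ι // isP ar Set.univ (a i)}
  let aJ : J → U := fun j => a j.1
  let qJ : J → M₀ := fun j => hB (b j.1)
  have hJ : SameOn (rel0Le ar N) (hA ∘ aJ) qJ := by
    constructor
    · intro i j
      have h1 : hA (aJ i) = hA (aJ j) ↔ aJ i = aJ j :=
        ⟨hA1 _ ⟨Sum.inl i.1, rfl⟩ _ ⟨Sum.inl j.1, rfl⟩ i.2 j.2, fun h => congrArg hA h⟩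
      have h2 : qJ i = qJ j ↔ b i.1 = b j.1 :=
        ⟨hB1 _ ⟨i.1, rfl⟩ _ ⟨j.1, rfl⟩ ((hPab _).1 i.2) ((hPab _).1 j.2),
          fun h => congrArg hB h⟩
      rw [Function.comp_apply, Function.comp_apply, h1, h2]
      exact hab.1 _ _
    · intro n r hr σ
      have h1 := hA2 n r (aJ ∘ σ) (fun i => ⟨⟨Sum.inl (σ i).1, rfl⟩, (σ i).2⟩)
      have h2 := hB2 n r (fun i => b (σ i).1)
        (fun i => ⟨⟨(σ i).1, rfl⟩, (hPab _).1 (σ i).2⟩)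
      have h3 := hab.2 n (Sum.inr r) hr (fun i => (σ i).1)
      exact h1.symm.trans (h3.trans h2)
  by_cases hy : isP ar Set.univ y
  · obtain ⟨z, hz⟩ := hstep _ _ hJ (hA y)
    refine ⟨J ⊕ Unit, Sum.elim aJ (fun _ => y), Sum.elim qJ (fun _ => z), ?_, ?_, ?_, ?_, ?_⟩
    · rintro (j | _)
      · exact j.2
      · exact hy
    · rintro x ⟨i | i, rfl⟩ hx
      · exact ⟨Sum.inl ⟨i, hx⟩, rfl⟩
      · exact ⟨Sum.inr (), rfl⟩
    · rintro (j | j)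
      · exact ⟨Sum.inl j.1, rfl⟩
      · exact ⟨Sum.inr (), rfl⟩
    · convert hz using 1
      funext i
      rcases i with i | i <;> rfl
    · exact fun i hi => ⟨Sum.inl ⟨i, hi⟩, rfl, rfl⟩
  · refine ⟨J, aJ, qJ, fun j => j.2, ?_, fun j => ⟨Sum.inl j.1, rfl⟩, hJ, ?_⟩
    · rintro x ⟨i | i, rfl⟩ hx
      · exact ⟨⟨i, hx⟩, rfl⟩
      · exact absurd hx hy
    · exact fun i hi => ⟨⟨i, hi⟩, rfl, rfl⟩

lemma u_step
    (hUage : (LFull ar Set.univ).age U = Kclass ar Set.univ M₀) [Nonempty M₀] (hUhom : (LFull ar Set.univ).IsUltrahomogeneous U) (N : ℕ)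
    (hstep : ∀ {ι : Type} [Finite ι] (p q : ι → M₀), SameOn (rel0Le ar N) p q → ∀ y : M₀,
      ∃ z : M₀, SameOn (rel0Le ar N)
        (Sum.elim p (fun _ : Unit => y)) (Sum.elim q (fun _ : Unit => z)))
    {ι : Type} [Finite ι] (hN : Nat.card (ι ⊕ Unit) ≤ N)
    (a b : ι → U) (hab : SameOn (relLe ar N) a b) (y : U) :
    ∃ z : U, SameOn (relLe ar N)
      (Sum.elim a (fun _ : Unit => y)) (Sum.elim b (fun _ : Unit => z)) := by
  classical
  obtain ⟨g, G1, G2, G3⟩ := exists_g hUage N hstep a b hab y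
  have hgood := goodU hUage
  set a' : ι ⊕ Unit → U := Sum.elim a (fun _ : Unit => y) with ha'
  have hPab : ∀ i, isP ar Set.univ (a i) ↔ isP ar Set.univ (b i) := by
    intro i
    have := hab.2 1 (Sum.inl LRel.P) trivial ![i]
    rwa [show a ∘ ![i] = ![a i] from by funext j; fin_cases j; rfl,
      show b ∘ ![i] = ![b i] from by funext j; fin_cases j; rfl] at this
  let A : Type u := {x : U // x ∈ Set.range a'}
  letI strA : (LFull ar Set.univ).Structure A :=
    { funMap := fun {_} f _ => isEmptyElim f
      RelMap := fun {n} r t => Sum.elim (α := LRel n) (β := (L0r ar Set.univ).Relations n)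
        (fun r => RelMap (L := LFull ar Set.univ) (n := n) (Sum.inl r) (fun i => (t i).1))
        (fun r => (∀ i, isP ar Set.univ (t i).1) ∧ RelMap r (fun i => g (t i).1)) r }
  have hl : LEmb ar (fun x : A => x.1) := fun n r t => Iff.rfl
  have hli : Function.Injective (fun x : A => x.1) := Subtype.val_injective
  have hr : ∀ (n : ℕ) (r : (L0r ar Set.univ).Relations n) (t : Fin n → A),
      RelMap (L := LFull ar Set.univ) (n := n) (Sum.inr r) t ↔
        (∀ i, isP ar Set.univ (t i).1) ∧ RelMap r (fun i => g (t i).1) :=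
    fun n r t => Iff.rfl
  have hrN : ∀ (n : ℕ) (r : (L0r ar Set.univ).Relations n), r.1 ≤ N → ∀ (t : Fin n → A),
      (RelMap (L := LFull ar Set.univ) (n := n) (Sum.inr r) t ↔
        RelMap (L := LFull ar Set.univ) (n := n) (Sum.inr r) (fun i => (t i).1)) := by
    intro n r hrn t
    rw [hr]
    constructor
    · rintro ⟨h1, h2⟩
      exact (G2 n r hrn _ fun i => ⟨(t i).2, h1 i⟩).2 h2
    · intro h
      have h1 := hgood.r_p n r _ h
      exact ⟨h1, (G2 n r hrn _ fun i => ⟨(t i).2, h1 i⟩).1 h⟩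
  have hfin : Finite A := (Set.finite_range a').to_subtype
  have hcard : Nat.card A ≤ N := by
    refine le_trans ?_ hN
    exact Nat.card_le_card_of_surjective (fun i => (⟨a' i, i, rfl⟩ : A))
      (by rintro ⟨_, i, rfl⟩; exact ⟨i, rfl⟩)
  have hK : (Bundled.of A : Bundled (LFull ar Set.univ).Structure) ∈ Kclass ar Set.univ M₀ := by
    refine ⟨hfin, ⟨?_, ?_, ?_, ?_, ?_, ?_, ?_⟩, ⟨?_⟩, ?_⟩
    · intro x
      have := hgood.part x.1
      rwa [hl.isP x, hl.isQ x] at this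
    · intro x
      have := hgood.not_both x.1
      rwa [hl.isP x, hl.isQ x] at this
    · intro x
      have := hgood.lam_q x.1
      rwa [hl.isLam x, hl.isQ x] at this
    · intro x
      have := hgood.rho_q x.1
      rwa [hl.isRho x, hl.isQ x] at this
    · intro x y
      have := hgood.h_q x.1 y.1
      rwa [hl.isH x y, hl.isQ x, hl.isQ y] at this
    · intro k r t h i
      exact (hl.isP (t i)).1 (h.1 i)
    · intro x y z w
      have := hgood.s_pq x.1 y.1 z.1 w.1
      rwa [hl.isS x y z w, hl.isP x, hl.isQ y, hl.isP z, hl.isQ w] at this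
    · exact
        { toFun := fun x => g x.1.1
          inj' := fun x x' h => Subtype.ext (Subtype.ext
            (G1 _ x.1.2 _ x'.1.2 ((hl.isP x.1).2 x.2) ((hl.isP x'.1).2 x'.2) h))
          map_fun' := fun f => isEmptyElim f
          map_rel' := fun {n} r t =>
            ⟨fun h => ⟨fun i => (hl.isP (t i).1).2 (t i).2, h⟩, fun h => h.2⟩ }
    · intro n h1 h2 s c hs
      have hn : n ≤ N := by
        have := Nat.card_le_card_of_injective (β := A) c hs.inj
        rw [Nat.card_eq_fintype_card, Fintype.card_fin] at this
        exact this.trans hcard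
      refine (hrN _ _ hn s).2 (npairU hUage n h1 _ _ ((hl.isNPair hli s c).2 hs))
  rw [← hUage] at hK
  obtain ⟨-, ⟨e'⟩⟩ := hK
  obtain ⟨e⟩ : Nonempty (A ↪[LFull ar Set.univ] U) := ⟨e'⟩
  let d : ι ⊕ Unit → A := fun i => ⟨a' i, i, rfl⟩
  have hsame : SameOn (Set.univ : Set (Σ n, (LFull ar Set.univ).Relations n))
      (fun i : ι => e (d (Sum.inl i))) b := by
    constructor
    · intro i j
      refine Iff.trans ?_ (hab.1 i j)
      exact e.injective.eq_iff.trans Subtype.ext_iff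
    · intro n r _ σ
      refine (e.map_rel r (fun i => d (Sum.inl (σ i)))).trans ?_
      rcases r with r | r
      · exact hab.2 n (Sum.inl r) trivial σ
      · refine (hr n r _).trans ?_
        constructor
        · rintro ⟨h1, h2⟩
          exact (G3 n r σ h1).1 h2
        · intro h
          have h1 : ∀ i, isP ar Set.univ (a (σ i)) :=
            fun i => (hPab _).2 (hgood.r_p n r _ h i)
          exact ⟨h1, (G3 n r σ h1).2 h⟩
  obtain ⟨γ, hγ⟩ := homog hUhom _ _ hsame
  refine ⟨γ (e (d (Sum.inr ()))), ?_⟩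
  have hb : Sum.elim b (fun _ : Unit => γ (e (d (Sum.inr ())))) = γ ∘ e ∘ d := by
    funext i
    rcases i with i | i
    · exact (hγ i).symm
    · rfl
  rw [hb]
  constructor
  · intro i j
    simp only [Function.comp_apply]
    rw [γ.injective.eq_iff, e.injective.eq_iff]
    exact (Subtype.ext_iff (a1 := d i) (a2 := d j)).symm
  · intro n r hrs σ
    have h1 : RelMap r (γ ∘ (e ∘ (d ∘ σ))) ↔ RelMap r (d ∘ σ) :=
      (γ.map_rel r _).trans (e.map_rel r _)
    refine Iff.trans ?_ h1.symm
    rcases r with r | r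
    · exact Iff.rfl
    · exact (hrN n r hrs (d ∘ σ)).symm

lemma u_invariant
    (hUage : (LFull ar Set.univ).age U = Kclass ar Set.univ M₀) [Nonempty M₀] (hUhom : (LFull ar Set.univ).IsUltrahomogeneous U)
    (hstep : ∀ N₀ : ℕ, ∃ N, N₀ ≤ N ∧ ∀ {ι : Type} [Finite ι] (p q : ι → M₀),
      SameOn (rel0Le ar N) p q → ∀ y : M₀, ∃ z : M₀, SameOn (rel0Le ar N)
        (Sum.elim p (fun _ : Unit => y)) (Sum.elim q (fun _ : Unit => z)))
    {α : Type} [Finite α] {n : ℕ} (φ : (LFull ar Set.univ).BoundedFormula α n) :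
    ∃ N, ∀ (v w : α → U) (x y : Fin n → U),
      SameOn (relLe ar N) (Sum.elim v x) (Sum.elim w y) → (φ.Realize v x ↔ φ.Realize w y) := by
  induction φ with
  | falsum => exact ⟨0, fun _ _ _ _ _ => Iff.rfl⟩
  | equal t₁ t₂ =>
    obtain ⟨i, rfl⟩ := term_var t₁
    obtain ⟨j, rfl⟩ := term_var t₂
    exact ⟨0, fun v w x y h => h.1 i j⟩
  | @rel n l r ts =>
    choose σ hσ using fun i => term_var (ts i)
    obtain rfl : ts = fun i => Term.var (σ i) := funext hσ
    obtain ⟨N, hN⟩ : ∃ N, (⟨l, r⟩ : Σ n, (LFull ar Set.univ).Relations n) ∈ relLe ar N := by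
      rcases r with r | r
      · exact ⟨0, trivial⟩
      · exact ⟨r.1, le_refl r.1⟩
    exact ⟨N, fun v w x y h => h.2 _ r hN σ⟩
  | imp _ _ h1 h2 =>
    obtain ⟨N1, h1⟩ := h1
    obtain ⟨N2, h2⟩ := h2
    refine ⟨max N1 N2, fun v w x y h => ?_⟩
    rw [BoundedFormula.realize_imp, BoundedFormula.realize_imp,
      h1 v w x y (h.mono (relLe_mono ar (le_max_left _ _))),
      h2 v w x y (h.mono (relLe_mono ar (le_max_right _ _)))]
  | @all n φ ih =>
    obtain ⟨N1, ih⟩ := ih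
    obtain ⟨N, hN, hst⟩ := hstep (max N1 (Nat.card ((α ⊕ Fin n) ⊕ Unit)))
    have main : ∀ (v w : α → U) (x y : Fin n → U),
        SameOn (relLe ar N) (Sum.elim v x) (Sum.elim w y) →
        (∀ u, φ.Realize v (Fin.snoc x u)) → ∀ u, φ.Realize w (Fin.snoc y u) := by
      intro v w x y h hv u
      obtain ⟨z, hz⟩ := u_step hUage hUhom N hst ((le_max_right _ _).trans hN) _ _ h.symm u
      refine (ih _ _ _ _ ?_).1 (hv z)
      have h3 := (hz.symm.mono (relLe_mono ar ((le_max_left _ _).trans hN))).comp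
        (Sum.elim (fun i => Sum.inl (Sum.inl i))
          (Fin.snoc (fun i => Sum.inl (Sum.inr i)) (Sum.inr ()) :
            Fin (n + 1) → (α ⊕ Fin n) ⊕ Unit))
      convert h3 using 1 <;>
      · funext i
        rcases i with i | i
        · rfl
        · refine Fin.lastCases ?_ (fun i => ?_) i <;> simp
    exact ⟨N, fun v w x y h => ⟨main v w x y h, main w v y x h.symm⟩⟩

end generic

/-- The theory of the generic structure `U` is model complete: between any
two models of `Th(U)`, any embedding (in particular any substructure inclusion) is
elementary. -/
theorem statement_13
    (ar : ℕ → ℕ)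
    (har_le : ∀ n : ℕ, 0 < n → ar n ≤ n)
    (har_mono : ∀ m n : ℕ, 0 < m → m ≤ n → ar m ≤ ar n)
    (li : ℕ → ℕ) (hli_pos : ∀ i, 0 < li i) (hli_mono : StrictMono li)
    (hli_cof : ∀ n : ℕ, ∃ i, n ≤ li i)
    (hli_arity : ∀ i : ℕ, ar (li i) < ar (li (i + 1)))
    (M₀ : Type u) [(L0r ar Set.univ).Structure M₀] [Countable M₀] [Infinite M₀]
    (hqe : ∀ (i k : ℕ) (φ : (L0r ar (setLe (li i))).Formula (Fin k)),
      ∃ ψ : (L0r ar (setLe (li i))).Formula (Fin k), ψ.IsQF ∧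
        ∀ a : Fin k → M₀,
          Formula.Realize (L := L0r ar Set.univ)
              ((L0incl ar (Set.subset_univ _)).onFormula φ) a ↔
            Formula.Realize (L := L0r ar Set.univ)
              ((L0incl ar (Set.subset_univ _)).onFormula ψ) a)
    (hM0hom : (L0r ar Set.univ).IsUltrahomogeneous M₀)
    (hM0jep : JointEmbedding ((L0r ar Set.univ).age M₀))
    (hM0ap : Amalgamation ((L0r ar Set.univ).age M₀))
    (U : Type u) [(LFull ar Set.univ).Structure U] [Countable U]
    (hUhom : (LFull ar Set.univ).IsUltrahomogeneous U)
    (hUage : (LFull ar Set.univ).age U = Kclass ar Set.univ M₀) :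
    ∀ (U' U'' : Type u) [(LFull ar Set.univ).Structure U'] [(LFull ar Set.univ).Structure U''],
      Theory.Model U' ((LFull ar Set.univ).completeTheory U) →
      Theory.Model U'' ((LFull ar Set.univ).completeTheory U) →
      ∀ (f : U' ↪[LFull ar Set.univ] U'')
        (k : ℕ) (φ : (LFull ar Set.univ).Formula (Fin k)) (a : Fin k → U'),
        φ.Realize (⇑f ∘ a) ↔ φ.Realize a := by
  intro U' U'' _ _ hU' hU'' f k φ a
  have hstep : ∀ N₀ : ℕ, ∃ N, N₀ ≤ N ∧ ∀ {ι : Type} [Finite ι] (p q : ι → M₀),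
      SameOn (rel0Le ar N) p q → ∀ y : M₀, ∃ z : M₀, SameOn (rel0Le ar N)
        (Sum.elim p (fun _ : Unit => y)) (Sum.elim q (fun _ : Unit => z)) := by
    intro N₀
    obtain ⟨i, hi⟩ := hli_cof N₀
    exact ⟨li i, hi, fun p q h y => m0_step' ar (li i) M₀ (hqe i) p q h y⟩
  obtain ⟨N, hN⟩ := u_invariant hUage hUhom hstep φ
  obtain ⟨ψ, hψ1, hψ2⟩ := exists_formula (relLe_finite ar N) (M := U)
    (fun v => φ.Realize v) (fun v w h hv => by
      refine (hN v w default default ?_).1 hv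
      have := h.comp (f := (Sum.elim id (fun i : Fin 0 => i.elim0) : Fin k ⊕ Fin 0 → Fin k))
      convert this using 1 <;>
      · funext i
        rcases i with i | i
        · rfl
        · exact i.elim0)
  let θ : (LFull ar Set.univ).Sentence :=
    Formula.iAlls (Fin k) (α := Empty) ((ψ.iff φ).relabel Sum.inr)
  have hθ : ∀ (V : Type u) [(LFull ar Set.univ).Structure V],
      V ⊨ θ ↔ ∀ v : Fin k → V, ψ.Realize v ↔ φ.Realize v := by
    intro V _
    simp only [θ, Sentence.Realize, Formula.realize_iAlls, Formula.realize_relabel,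
      Formula.realize_iff]
    exact Iff.rfl
  have hmem : θ ∈ (LFull ar Set.univ).completeTheory U := (hθ U).2 hψ1
  have h1 := (hθ U').1 (hU'.realize_of_mem θ hmem)
  have h2 := (hθ U'').1 (hU''.realize_of_mem θ hmem)
  rw [← h1, ← h2]
  refine (hψ2 U' U'' a (f ∘ a) ⟨fun i j => ?_, fun n r _ σ => ?_⟩).symm
  · exact f.injective.eq_iff.symm
  · exact (f.map_rel r (a ∘ σ)).symm

end Ivanov
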